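/- Let X be a Banach space having no closed subspace isomorphic to c₀, and let {z_j}_{j=1}^∞ ⊆ X satisfy ‖z_j‖ = 1 for all j. Then sup_{Δ} ‖∑_{j∈Δ} z_j‖ = ∞, where the supremum is over all finite subsets Δ of ℕ. -/

import Mathlib

open scoped BigOperators ZeroAtInfty

/-- Rosenthal's disjointification lemma (Kupka's proof), in terms of finite sums. -/
lemma rosenthal_aux (ε : ℝ) (n : ℕ) : ∀ a : ℕ → ℕ → ℝ, (∀ j k, 0 ≤ a j k) →
    (∀ (j : ℕ) (F : Finset ℕ), j ∉ F → ∑ k ∈ F, a j k ≤ n * ε) →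
    0 ≤ ε →
    ∃ u : ℕ → ℕ, Function.Injective u ∧
      ∀ (j : ℕ) (F : Finset ℕ), j ∉ F → ∑ k ∈ F, a (u j) (u k) ≤ ε := by
  induction n with
  | zero =>
    intro a ha h hε
    refine ⟨id, Function.injective_id, fun j F hj => ?_⟩
    have := h j F hj
    simp only [Nat.cast_zero, zero_mul] at this
    exact this.trans hε
  | succ n ih =>
    intro a ha h hε
    have pair_inj : ∀ p, Function.Injective (Nat.pair p) := by
      intro p x y hxy
      exact (Nat.pair_eq_pair.1 hxy).2
    by_cases hc : ∃ p, ∀ (j : ℕ) (F : Finset ℕ), j ∉ F →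
        ∑ k ∈ F, a (Nat.pair p j) (Nat.pair p k) ≤ ε
    · obtain ⟨p, hp⟩ := hc
      exact ⟨Nat.pair p, pair_inj p, hp⟩
    · push Not at hc
      choose q G hq hG using hc
      have hv : Function.Injective (fun p => Nat.pair p (q p)) := by
        intro x y hxy
        exact (Nat.pair_eq_pair.1 hxy).1
      obtain ⟨u, hu, hu'⟩ := ih (fun i k => a (Nat.pair i (q i)) (Nat.pair k (q k)))
        (fun _ _ => ha _ _) (by
          intro j F hj
          have h1 := h (Nat.pair j (q j))
            (F.image (fun p => Nat.pair p (q p)) ∪ (G j).image (Nat.pair j)) (by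
              simp only [Finset.mem_union, Finset.mem_image, not_or, not_exists, not_and]
              refine ⟨fun x hx hxy => ?_, fun x hx hxy => ?_⟩
              · exact hj ((Nat.pair_eq_pair.1 hxy).1 ▸ hx)
              · exact hq j ((Nat.pair_eq_pair.1 hxy).2 ▸ hx))
          rw [Finset.sum_union, Finset.sum_image (fun x _ y _ e => hv e),
            Finset.sum_image (fun x _ y _ e => pair_inj j e)] at h1
          · have h2 := hG j
            push_cast at h1
            linarith
          · rw [Finset.disjoint_left]
            simp only [Finset.mem_image, not_exists, not_and]
            rintro _ ⟨x, hx, rfl⟩ y hy hxy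
            exact hj ((Nat.pair_eq_pair.1 hxy).1 ▸ hx)) hε
      exact ⟨fun i => Nat.pair (u i) (q (u i)), hv.comp hu, hu'⟩

lemma sum_abs_dual_le {X : Type*} [NormedAddCommGroup X] [NormedSpace ℝ X] (z : ℕ → X) (M : ℝ)
    (hM : ∀ F : Finset ℕ, ‖∑ j ∈ F, z j‖ ≤ M) (g : StrongDual ℝ X) (F : Finset ℕ) :
    ∑ k ∈ F, |g (z k)| ≤ 2 * M * ‖g‖ := by
  have key : ∀ G : Finset ℕ, |∑ k ∈ G, g (z k)| ≤ M * ‖g‖ := by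
    intro G
    rw [← map_sum, ← Real.norm_eq_abs, mul_comm]
    exact (g.le_opNorm _).trans (mul_le_mul_of_nonneg_left (hM G) (norm_nonneg _))
  rw [← Finset.sum_filter_add_sum_filter_not F (fun k => 0 ≤ g (z k))]
  have h1 := (abs_le.1 (key (F.filter (fun k => 0 ≤ g (z k))))).2
  have h2 := (abs_le.1 (key (F.filter (fun k => ¬ 0 ≤ g (z k))))).1
  have e1 : ∑ k ∈ F with 0 ≤ g (z k), |g (z k)| = ∑ k ∈ F with 0 ≤ g (z k), g (z k) :=
    Finset.sum_congr rfl fun k hk => abs_of_nonneg (Finset.mem_filter.1 hk).2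
  have e2 : ∑ k ∈ F with ¬ 0 ≤ g (z k), |g (z k)| = -∑ k ∈ F with ¬ 0 ≤ g (z k), g (z k) := by
    rw [← Finset.sum_neg_distrib]
    exact Finset.sum_congr rfl fun k hk =>
      abs_of_neg (not_le.1 (Finset.mem_filter.1 hk).2)
  rw [e1, e2]
  linarith

lemma norm_sum_smul_le {X : Type*} [NormedAddCommGroup X] [NormedSpace ℝ X] (z : ℕ → X) (M : ℝ)
    (hM : ∀ F : Finset ℕ, ‖∑ j ∈ F, z j‖ ≤ M) (F : Finset ℕ) (c : ℕ → ℝ) (A : ℝ) (hA : 0 ≤ A)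
    (hc : ∀ k ∈ F, |c k| ≤ A) : ‖∑ k ∈ F, c k • z k‖ ≤ 2 * M * A := by
  have hM0 : 0 ≤ M := by simpa using hM ∅
  refine NormedSpace.norm_le_dual_bound ℝ _ (by positivity) fun g => ?_
  rw [map_sum]
  calc ‖∑ k ∈ F, g (c k • z k)‖ ≤ ∑ k ∈ F, ‖g (c k • z k)‖ := norm_sum_le _ _
    _ ≤ ∑ k ∈ F, A * |g (z k)| := by
        refine Finset.sum_le_sum fun k hk => ?_
        rw [map_smul, smul_eq_mul, norm_mul, Real.norm_eq_abs, Real.norm_eq_abs]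
        exact mul_le_mul_of_nonneg_right (hc k hk) (abs_nonneg _)
    _ = A * ∑ k ∈ F, |g (z k)| := by rw [Finset.mul_sum]
    _ ≤ A * (2 * M * ‖g‖) := mul_le_mul_of_nonneg_left (sum_abs_dual_le z M hM g F) hA
    _ = 2 * M * A * ‖g‖ := by ring

lemma c0_abs_le (f : C₀(ℕ, ℝ)) (k : ℕ) : |f k| ≤ ‖f‖ := by
  rw [← Real.norm_eq_abs, ← ZeroAtInftyContinuousMap.norm_toBCF_eq_norm]
  exact f.toBCF.norm_coe_le_norm k

lemma c0_norm_le (f : C₀(ℕ, ℝ)) (C : ℝ) (hC : 0 ≤ C) (h : ∀ k, |f k| ≤ C) : ‖f‖ ≤ C := by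
  rw [← ZeroAtInftyContinuousMap.norm_toBCF_eq_norm]
  exact (BoundedContinuousFunction.norm_le hC).2 h

lemma c0_summable {X : Type*} [NormedAddCommGroup X] [NormedSpace ℝ X] [CompleteSpace X]
    (z : ℕ → X) (M : ℝ) (hM : ∀ F : Finset ℕ, ‖∑ j ∈ F, z j‖ ≤ M) (f : C₀(ℕ, ℝ)) :
    Summable (fun k => f k • z k) := by
  have hM0 : 0 ≤ M := by simpa using hM ∅
  rw [summable_iff_vanishing_norm]
  intro ε hε
  have hδ : 0 < ε / (2 * M + 1) := by positivity
  have ht : Filter.Tendsto f Filter.cofinite (nhds 0) := by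
    have := zero_at_infty f
    rwa [Filter.cocompact_eq_cofinite] at this
  have hev := (Metric.tendsto_nhds.1 ht) _ hδ
  rw [Filter.eventually_cofinite] at hev
  refine ⟨hev.toFinset, fun t hd => ?_⟩
  have := norm_sum_smul_le z M hM t f _ hδ.le (fun k hk => by
    have h1 := Finset.disjoint_left.1 hd hk
    simp only [Set.Finite.mem_toFinset, Set.mem_ofPred_eq, not_not, dist_zero_right,
      Real.norm_eq_abs] at h1
    exact h1.le)
  refine this.trans_lt ?_
  rw [← mul_div_assoc, div_lt_iff₀ (by positivity)]
  nlinarith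

theorem stmt_11 {X : Type*} [NormedAddCommGroup X] [NormedSpace ℝ X] [CompleteSpace X]
    -- no closed subspace of `X` is isomorphic to `c₀`
    (hc0 : ¬ ∃ Y : Submodule ℝ X, IsClosed (Y : Set X) ∧ Nonempty (Y ≃L[ℝ] C₀(ℕ, ℝ)))
    (z : ℕ → X) (hz : ∀ j, ‖z j‖ = 1) :
    -- `sup_Δ ‖∑_{j ∈ Δ} z_j‖ = ∞`
    ∀ M : ℝ, ∃ Δ : Finset ℕ, M < ‖∑ j ∈ Δ, z j‖ := by
  by_contra! hcon
  obtain ⟨M, hM⟩ := hcon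
  apply hc0
  have hex : ∀ j, ∃ g : StrongDual ℝ X, ‖g‖ = 1 ∧ g (z j) = 1 := by
    intro j
    obtain ⟨g, hg, hg'⟩ := exists_dual_vector ℝ (z j) (by
      intro h0
      have := hz j
      simp [h0] at this)
    exact ⟨g, hg, by simpa [hz j] using hg'⟩
  choose g hg hgz using hex
  obtain ⟨n, hn⟩ := exists_nat_ge (2 * M / (1 / 2))
  obtain ⟨u, hu, hu'⟩ := rosenthal_aux (1 / 2) n (fun j k => |g j (z k)|)
    (fun _ _ => abs_nonneg _) (fun j F _ => by
      have h1 := sum_abs_dual_le z M hM (g j) F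
      rw [hg j, mul_one] at h1
      rw [div_le_iff₀ (by norm_num)] at hn
      exact h1.trans hn) (by norm_num)
  have hw : ∀ F : Finset ℕ, ‖∑ j ∈ F, z (u j)‖ ≤ M := by
    intro F
    have := hM (F.image u)
    rwa [Finset.sum_image (fun x _ y _ e => hu e)] at this
  have hs := c0_summable (fun j => z (u j)) M hw
  let T₀ : C₀(ℕ, ℝ) →ₗ[ℝ] X :=
    { toFun := fun f => ∑' k, f k • z (u k)
      map_add' := fun f f' => by
        rw [← (hs f).tsum_add (hs f')]
        simp only [ZeroAtInftyContinuousMap.add_apply, add_smul]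
      map_smul' := fun c f => by
        rw [RingHom.id_apply, ← (hs f).tsum_const_smul c]
        simp only [ZeroAtInftyContinuousMap.smul_apply, smul_eq_mul, mul_smul] }
  have hT₀ : ∀ f, Filter.Tendsto (fun F : Finset ℕ => ‖∑ k ∈ F, f k • z (u k)‖) Filter.atTop
      (nhds ‖T₀ f‖) := fun f => (hs f).hasSum.norm
  let T : C₀(ℕ, ℝ) →L[ℝ] X := T₀.mkContinuous (2 * M) (fun f =>
    le_of_tendsto (hT₀ f) (Filter.Eventually.of_forall fun F =>
      norm_sum_smul_le _ M hw F f _ (norm_nonneg _) (fun k _ => c0_abs_le f k)))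
  have hlow : ∀ f, ‖f‖ ≤ 2 * ‖T f‖ := by
    intro f
    have h1 : ∀ j, |f j| ≤ ‖T f‖ + 1 / 2 * ‖f‖ := by
      intro j
      rw [← sub_le_iff_le_add]
      refine ge_of_tendsto (hT₀ f) ?_
      filter_upwards [Filter.eventually_ge_atTop {j}] with F hF
      have hjF : j ∈ F := by simpa using hF
      have h2 : ‖g (u j) (∑ k ∈ F, f k • z (u k))‖ ≤ ‖∑ k ∈ F, f k • z (u k)‖ := by
        have := (g (u j)).le_opNorm (∑ k ∈ F, f k • z (u k))
        rwa [hg, one_mul] at this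
      refine le_trans ?_ h2
      rw [map_sum, ← Finset.add_sum_erase F _ hjF, map_smul, hgz, smul_eq_mul, mul_one,
        Real.norm_eq_abs]
      have h3 : |∑ k ∈ F.erase j, g (u j) (f k • z (u k))| ≤ 1 / 2 * ‖f‖ := by
        calc |∑ k ∈ F.erase j, g (u j) (f k • z (u k))|
            ≤ ∑ k ∈ F.erase j, |g (u j) (f k • z (u k))| := Finset.abs_sum_le_sum_abs _ _
          _ ≤ ∑ k ∈ F.erase j, |g (u j) (z (u k))| * ‖f‖ := by
              refine Finset.sum_le_sum fun k _ => ?_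
              rw [map_smul, smul_eq_mul, abs_mul, mul_comm]
              exact mul_le_mul_of_nonneg_left (c0_abs_le f k) (abs_nonneg _)
          _ = (∑ k ∈ F.erase j, |g (u j) (z (u k))|) * ‖f‖ := by rw [Finset.sum_mul]
          _ ≤ 1 / 2 * ‖f‖ := mul_le_mul_of_nonneg_right
              (hu' j _ (Finset.notMem_erase j F)) (norm_nonneg _)
      have h4 := abs_sub_abs_le_abs_add (f j) (∑ k ∈ F.erase j, g (u j) (f k • z (u k)))
      linarith
    have := c0_norm_le f _ (by positivity) h1
    linarith
  have hanti : AntilipschitzWith 2 T := AddMonoidHomClass.antilipschitz_of_bound T hlow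
  have hcl : IsClosed (Set.range T) := hanti.isClosed_range T.uniformContinuous
  refine ⟨T.range, hcl, ⟨(T.equivRange hanti.injective hcl).symm⟩⟩
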